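/- arXiv:1904.02574 — 8 statements merged into one kernel-verified Lean document; each statement's English description precedes it below -/
import Mathlib

section
/- Let E be a finite-dimensional vector space over a field 𝕜 with a nondegenerate symmetric bilinear form B, let V ≤ E be a subspace on which B restricts nondegenerately, and let A be a skew-adjoint endomorphism of E with A(V) ⊆ V^⊥ and A(V^⊥) ⊆ V. Then A(V^⊥) = (ker A ∩ V)^⊥ ∩ V, i.e. the image of V^⊥ under A is exactly the set of vectors of V that are B-orthogonal to every vector of V killed by A. (This is the pointwise linear-algebra content of equation (4) of the paper, for the differential N of the conformal Gauss map.) -/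
/-!
Skew-adjointness gives `(range A)^⊥ = ker A`, hence `range A = (ker A)^⊥` by finite-dimensional
biduality. Since `A` interchanges the summands of `E = V ⊕ V^⊥`, both its kernel and its range
split along this decomposition: a vector of `V` orthogonal to `ker A ∩ V` is orthogonal to all of
`ker A`, so it lies in `range A`, and only the `V^⊥`-component of a preimage contributes to it.
-/

/-- The `B`-orthogonal complement of a subspace `V`:
all `x` with `B x v = 0` for every `v ∈ V`. -/
def orthSub {𝕜 E : Type*} [Field 𝕜] [AddCommGroup E] [Module 𝕜 E]
    (B : LinearMap.BilinForm 𝕜 E) (V : Submodule 𝕜 E) : Submodule 𝕜 E where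
  carrier := {x | ∀ v ∈ V, B x v = 0}
  add_mem' := by intro x y hx hy v hv; simp [hx v hv, hy v hv]
  zero_mem' := by intro v hv; simp
  smul_mem' := by intro c x hx v hv; simp [hx v hv]

/-- Equation (4) of the paper, pointwise: if `A` is skew-adjoint, interchanges `V` and
`V^⊥`, then `A (V^⊥) = (ker A ∩ V)^⊥ ∩ V`. -/
theorem conformalGauss_image_eq_orth_ker
    {𝕜 E : Type*} [Field 𝕜] [AddCommGroup E] [Module 𝕜 E] [FiniteDimensional 𝕜 E]
    (B : LinearMap.BilinForm 𝕜 E) (hB : B.Nondegenerate)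
    (hsymm : ∀ x y, B x y = B y x)
    (V : Submodule 𝕜 E) (hV : (B.restrict V).Nondegenerate)
    (A : E →ₗ[𝕜] E) (hskew : ∀ x y, B (A x) y = - B x (A y))
    (hAV : ∀ x ∈ V, A x ∈ orthSub B V)
    (hAVp : ∀ x ∈ orthSub B V, A x ∈ V) :
    Submodule.map A (orthSub B V) = orthSub B (LinearMap.ker A ⊓ V) ⊓ V := by
  have hrefl : B.IsRefl := fun x y h => by rw [hsymm, h]
  have horth : orthSub B V = B.orthogonal V := by
    ext x
    exact ⟨fun h v hv => hrefl _ _ (h v hv), fun h v hv => hrefl _ _ (h v hv)⟩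
  have hcompl : IsCompl V (orthSub B V) :=
    horth ▸ LinearMap.BilinForm.isCompl_orthogonal_of_restrict_nondegenerate hrefl hV
  have hdisj : ∀ z ∈ V, z ∈ orthSub B V → z = 0 := fun z h₁ h₂ =>
    Submodule.disjoint_def.mp hcompl.disjoint z h₁ h₂
  have hsplit : ∀ z : E, ∃ v ∈ V, ∃ p ∈ orthSub B V, v + p = z := fun z =>
    Submodule.mem_sup.mp (hcompl.sup_eq_top ▸ Submodule.mem_top)
  apply le_antisymm
  · rintro _ ⟨p, hp, rfl⟩
    refine ⟨fun k hk => ?_, hAVp p hp⟩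
    rw [hskew, LinearMap.mem_ker.mp hk.1, map_zero, neg_zero]
  · rintro x ⟨hxk, hxV⟩
    have hker : ∀ k, A k = 0 → B x k = 0 := by
      intro k hk
      obtain ⟨v, hv, p, hp, rfl⟩ := hsplit k
      rw [map_add] at hk
      -- `A v = -A p` lies in both `V^⊥` and `V`, so each component of `k` is killed by `A`.
      have hAv : A v = 0 := by
        refine hdisj _ ?_ (hAV v hv)
        rw [eq_neg_of_add_eq_zero_left hk]
        exact V.neg_mem (hAVp p hp)
      rw [map_add, hxk v ⟨hAv, hv⟩, hsymm x p, hp x hxV, add_zero]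
    have hrange : x ∈ LinearMap.range A := by
      rw [← LinearMap.BilinForm.orthogonal_orthogonal hB hrefl (LinearMap.range A)]
      intro k hk
      have hAk : A k = 0 := hB.1 _ fun y => by
        have h : B (A y) k = 0 := hk (A y) ⟨y, rfl⟩
        rw [hskew, hsymm, h, neg_zero]
      exact hrefl _ _ (hker k hAk)
    obtain ⟨e, rfl⟩ := hrange
    obtain ⟨v, hv, p, hp, rfl⟩ := hsplit e
    have hAv : A v = 0 := by
      refine hdisj _ ?_ (hAV v hv)
      have h := V.sub_mem hxV (hAVp p hp)
      rwa [map_add, add_sub_cancel_right] at h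
    exact ⟨p, hp, by rw [map_add, hAv, zero_add]⟩
end

section
/- Let E be a finite-dimensional vector space over a field 𝕜 with a nondegenerate symmetric bilinear form B, let V ≤ E be a subspace on which B restricts nondegenerately, and let A be a skew-adjoint endomorphism of E with A(V) ⊆ V^⊥ and A(V^⊥) ⊆ V. Suppose W ≤ V is a totally isotropic subspace with W^⊥ ∩ V = W (i.e. W is maximal isotropic in V) and W ⊆ ker A. Then A(V^⊥) ⊆ W and A(A(v)) = 0 for every v ∈ V^⊥. (This is the pointwise form of Lemma 1 of the paper: the conformal Gauss map of a conformal immersion is strongly conformal, with A playing the role of N^{1,0} and W the role of f^{0,1}.) -/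
/-- Lemma 1 of the paper (pointwise): if `W ≤ V` is maximal isotropic in `V` and
`W ⊆ ker A`, then `A(V^⊥) ⊆ W` and `(A ∘ A)|_{V^⊥} = 0` (strong conformality). -/
theorem stronglyConformal_of_maxIsotropic_ker
    {𝕜 E : Type*} [Field 𝕜] [AddCommGroup E] [Module 𝕜 E] [FiniteDimensional 𝕜 E]
    (B : LinearMap.BilinForm 𝕜 E) (hB : B.Nondegenerate)
    (hsymm : ∀ x y, B x y = B y x)
    (V : Submodule 𝕜 E) (hV : (B.restrict V).Nondegenerate)
    (A : E →ₗ[𝕜] E) (hskew : ∀ x y, B (A x) y = - B x (A y))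
    (hAV : ∀ x ∈ V, A x ∈ orthSub B V)
    (hAVp : ∀ x ∈ orthSub B V, A x ∈ V)
    (W : Submodule 𝕜 E) (hWV : W ≤ V)
    (hWiso : ∀ x ∈ W, ∀ y ∈ W, B x y = 0)
    (hWmax : orthSub B W ⊓ V = W)
    (hWker : W ≤ LinearMap.ker A) :
    Submodule.map A (orthSub B V) ≤ W ∧ ∀ v ∈ orthSub B V, A (A v) = 0 := by
  -- `A v ∈ V` is orthogonal to `W`, since `B (A v) w = -B v (A w)` and `A w = 0`.
  have key : ∀ v ∈ orthSub B V, A v ∈ W := by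
    intro v hv
    rw [← hWmax]
    refine ⟨fun w hw => ?_, hAVp v hv⟩
    rw [hskew, LinearMap.mem_ker.mp (hWker hw), map_zero, neg_zero]
  exact ⟨Submodule.map_le_iff_le_comap.mpr key,
    fun v hv => LinearMap.mem_ker.mp (hWker (key v hv))⟩
end

section
/- Let E be a finite-dimensional vector space over a field 𝕜 with a nondegenerate symmetric bilinear form B, let V ≤ E be a subspace on which B restricts nondegenerately, and let A be a skew-adjoint endomorphism of E with A(V) ⊆ V^⊥ and A(V^⊥) ⊆ V. Suppose W ≤ V is a totally isotropic subspace with W^⊥ ∩ V = W. Then W ⊆ ker A if and only if A(V^⊥) ⊆ W. (This is the equivalence asserted in condition (2) of Proposition 5 of the paper.) -/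
/-- The equivalence in condition (2) of Proposition 5 of the paper: for `W` maximal
isotropic in `V`, one has `W ⊆ ker A` iff `A(V^⊥) ⊆ W`. -/
theorem ker_iff_image_le_of_maxIsotropic
    {𝕜 E : Type*} [Field 𝕜] [AddCommGroup E] [Module 𝕜 E] [FiniteDimensional 𝕜 E]
    (B : LinearMap.BilinForm 𝕜 E) (hB : B.Nondegenerate)
    (hsymm : ∀ x y, B x y = B y x)
    (V : Submodule 𝕜 E) (hV : (B.restrict V).Nondegenerate)
    (A : E →ₗ[𝕜] E) (hskew : ∀ x y, B (A x) y = - B x (A y))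
    (hAV : ∀ x ∈ V, A x ∈ orthSub B V)
    (hAVp : ∀ x ∈ orthSub B V, A x ∈ V)
    (W : Submodule 𝕜 E) (hWV : W ≤ V)
    (hWiso : ∀ x ∈ W, ∀ y ∈ W, B x y = 0)
    (hWmax : orthSub B W ⊓ V = W) :
    W ≤ LinearMap.ker A ↔ Submodule.map A (orthSub B V) ≤ W := by
  constructor
  · rintro hker _ ⟨x, hx, rfl⟩
    rw [← hWmax]
    refine ⟨fun w hw => ?_, hAVp x hx⟩
    have hAw : A w = 0 := hker hw
    rw [hskew, hAw, map_zero, neg_zero]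
  · intro himg w hw
    rw [LinearMap.mem_ker]
    have hrefl : B.IsRefl := fun x y h => by rw [hsymm, h]
    have hcompl := LinearMap.BilinForm.isCompl_orthogonal_of_restrict_nondegenerate hrefl hV
    -- `A w` is orthogonal to `V` by `hAV`, and to `V^⊥` by skew-adjointness and isotropy of `W`.
    refine hB.1 _ fun y => ?_
    obtain ⟨v, hv, u, hu, rfl⟩ := Submodule.mem_sup.mp (hcompl.sup_eq_top ▸ Submodule.mem_top (x := y))
    have hu' : u ∈ orthSub B V := fun n hn => by rw [hsymm]; exact hu n hn
    rw [map_add, hAV w (hWV hw) v hv, hskew, hWiso w hw _ (himg ⟨u, hu', rfl⟩), neg_zero, add_zero]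
end

section
/- Let E be a finite-dimensional vector space over a field 𝕜 with a nondegenerate symmetric bilinear form B, let V ≤ E be a subspace on which B restricts nondegenerately, and let A and T be skew-adjoint endomorphisms of E, each mapping V into V^⊥ and V^⊥ into V. Suppose ℓ ≤ V is a one-dimensional subspace with B(ℓ,ℓ) = 0 (a null line), that T(V^⊥) ⊆ ℓ, and that A(ℓ) = 0. Then T(ℓ) = 0, (A∘T)(v) = 0 and (T∘T)(v) = 0 for all v ∈ V^⊥. (This is the pointwise form of Proposition 3 of the paper, with T playing the role of the tension field τ_V, A the role of N, and ℓ the role of the line bundle f.) -/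
/-- Proposition 3 of the paper (pointwise): if `T(V^⊥)` lies in a null line `ℓ ≤ V`
killed by `A`, then `T ℓ = 0`, `(A ∘ T)|_{V^⊥} = 0` and `(T ∘ T)|_{V^⊥} = 0`. -/
theorem tension_field_conditions
    {𝕜 E : Type*} [Field 𝕜] [AddCommGroup E] [Module 𝕜 E] [FiniteDimensional 𝕜 E]
    (B : LinearMap.BilinForm 𝕜 E) (hB : B.Nondegenerate)
    (hsymm : ∀ x y, B x y = B y x)
    (V : Submodule 𝕜 E) (hV : (B.restrict V).Nondegenerate)
    (A T : E →ₗ[𝕜] E)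
    (hAskew : ∀ x y, B (A x) y = - B x (A y))
    (hTskew : ∀ x y, B (T x) y = - B x (T y))
    (hAV : ∀ x ∈ V, A x ∈ orthSub B V) (hAVp : ∀ x ∈ orthSub B V, A x ∈ V)
    (hTV : ∀ x ∈ V, T x ∈ orthSub B V) (hTVp : ∀ x ∈ orthSub B V, T x ∈ V)
    (ℓ : Submodule 𝕜 E) (hdim : Module.finrank 𝕜 ℓ = 1) (hℓV : ℓ ≤ V)
    (hnull : ∀ x ∈ ℓ, ∀ y ∈ ℓ, B x y = 0)
    (hTℓ : ∀ v ∈ orthSub B V, T v ∈ ℓ)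
    (hAℓ : ∀ x ∈ ℓ, A x = 0) :
    (∀ x ∈ ℓ, T x = 0) ∧ (∀ v ∈ orthSub B V, A (T v) = 0) ∧
      (∀ v ∈ orthSub B V, T (T v) = 0) := by
  have hrefl : B.IsRefl := fun x y h => by rw [hsymm, h]
  have hcompl := LinearMap.BilinForm.isCompl_orthogonal_of_restrict_nondegenerate hrefl hV
  have key : ∀ x ∈ ℓ, T x = 0 := by
    intro x hx
    refine hB.1 _ fun y => ?_
    -- By nondegeneracy on `V`, test `T x` against the `V` and `V^⊥` components of `y`:
    -- the first pairing vanishes as `T x ∈ V^⊥`, the second by skewness and nullity of `ℓ`.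
    have hy : y ∈ V ⊔ B.orthogonal V := by rw [hcompl.sup_eq_top]; trivial
    obtain ⟨v, hv, w, hw, rfl⟩ := Submodule.mem_sup.1 hy
    have hw' : w ∈ orthSub B V := fun u hu => by rw [hsymm]; exact hw u hu
    rw [map_add, hTV x (hℓV hx) v hv, hTskew, hnull x hx _ (hTℓ w hw'), neg_zero, add_zero]
  exact ⟨key, fun v hv => hAℓ _ (hTℓ v hv), fun v hv => key _ (hTℓ v hv)⟩
end

section
/- Let E be a finite-dimensional vector space over a field 𝕜 with a nondegenerate symmetric bilinear form B, let V ≤ E be a 4-dimensional subspace on which B restricts nondegenerately, and let A and T be skew-adjoint endomorphisms of E, each mapping V into V^⊥ and V^⊥ into V. Suppose A(V^⊥) is a 2-dimensional totally isotropic subspace of V and (A∘T)(v) = 0 for all v ∈ V^⊥. Then T(V^⊥) ⊆ A(V^⊥), hence T(V^⊥) is totally isotropic and (T∘T)(v) = 0 for all v ∈ V^⊥. (This is the pointwise content of Remark 2 of the paper: for strongly conformal V with rank N^{1,0}|_{V^⊥} = 2, equation (8) forces equation (9).) -/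
/-- A totally isotropic subspace `U` of half the dimension of a nondegenerate `V` is its own
orthogonal complement within `V`. -/
theorem mem_of_orthogonal_of_half_dim
    {𝕜 E : Type*} [Field 𝕜] [AddCommGroup E] [Module 𝕜 E] [FiniteDimensional 𝕜 E]
    {B : LinearMap.BilinForm 𝕜 E} {V U : Submodule 𝕜 E} (hV : (B.restrict V).Nondegenerate)
    (hUV : U ≤ V) (hdim : Module.finrank 𝕜 V = 2 * Module.finrank 𝕜 U)
    (hiso : ∀ x ∈ U, ∀ y ∈ U, B x y = 0)
    {x : E} (hxV : x ∈ V) (hx : ∀ u ∈ U, B u x = 0) : x ∈ U := by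
  have hU' : Module.finrank 𝕜 (U.comap V.subtype) = Module.finrank 𝕜 U :=
    (Submodule.comapSubtypeEquivOfLe hUV).finrank_eq
  have hle : U.comap V.subtype ≤ (B.restrict V).orthogonal (U.comap V.subtype) :=
    fun y hy z hz => hiso z hz y hy
  have heq := Submodule.eq_of_le_of_finrank_eq hle (by
    rw [LinearMap.BilinForm.finrank_orthogonal hV, hU', hdim]
    omega)
  have hmem : (⟨x, hxV⟩ : V) ∈ (B.restrict V).orthogonal (U.comap V.subtype) :=
    fun z hz => hx z hz
  rw [← heq] at hmem
  exact hmem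

/-- Remark 2 of the paper (pointwise): if `A(V^⊥)` is a 2-dimensional totally
isotropic subspace of the 4-dimensional `V` and `A ∘ T` vanishes on `V^⊥`, then
`T(V^⊥) ⊆ A(V^⊥)`, so `T(V^⊥)` is totally isotropic and `(T ∘ T)|_{V^⊥} = 0`. -/
theorem eq8_forces_eq9
    {𝕜 E : Type*} [Field 𝕜] [AddCommGroup E] [Module 𝕜 E] [FiniteDimensional 𝕜 E]
    (B : LinearMap.BilinForm 𝕜 E) (hB : B.Nondegenerate)
    (hsymm : ∀ x y, B x y = B y x)
    (V : Submodule 𝕜 E) (hV : (B.restrict V).Nondegenerate)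
    (hVdim : Module.finrank 𝕜 V = 4)
    (A T : E →ₗ[𝕜] E)
    (hAskew : ∀ x y, B (A x) y = - B x (A y))
    (hTskew : ∀ x y, B (T x) y = - B x (T y))
    (hAV : ∀ x ∈ V, A x ∈ orthSub B V) (hAVp : ∀ x ∈ orthSub B V, A x ∈ V)
    (hTV : ∀ x ∈ V, T x ∈ orthSub B V) (hTVp : ∀ x ∈ orthSub B V, T x ∈ V)
    (hUdim : Module.finrank 𝕜 (Submodule.map A (orthSub B V)) = 2)
    (hUiso : ∀ x ∈ Submodule.map A (orthSub B V), ∀ y ∈ Submodule.map A (orthSub B V),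
      B x y = 0)
    (hAT : ∀ v ∈ orthSub B V, A (T v) = 0) :
    (∀ v ∈ orthSub B V, T v ∈ Submodule.map A (orthSub B V)) ∧
      (∀ v ∈ orthSub B V, ∀ w ∈ orthSub B V, B (T v) (T w) = 0) ∧
      (∀ v ∈ orthSub B V, T (T v) = 0) := by
  have h1 : ∀ v ∈ orthSub B V, T v ∈ Submodule.map A (orthSub B V) := by
    intro v hv
    refine mem_of_orthogonal_of_half_dim hV ?_ (by rw [hVdim, hUdim]) hUiso (hTVp v hv) ?_
    · rintro _ ⟨w, hw, rfl⟩
      exact hAVp w hw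
    · rintro _ ⟨w, hw, rfl⟩
      rw [hAskew, hAT v hv, map_zero, neg_zero]
  have h2 : ∀ v ∈ orthSub B V, ∀ w ∈ orthSub B V, B (T v) (T w) = 0 :=
    fun v hv w hw => hUiso _ (h1 v hv) _ (h1 w hw)
  refine ⟨h1, h2, fun v hv => hB.1 _ fun y => ?_⟩
  have hrefl : B.IsRefl := fun x y h => by rw [hsymm, h]
  have hcompl := LinearMap.BilinForm.isCompl_orthogonal_of_restrict_nondegenerate hrefl hV
  obtain ⟨a, ha, b, hb, rfl⟩ :=
    Submodule.mem_sup.1 (hcompl.sup_eq_top ▸ Submodule.mem_top : y ∈ V ⊔ B.orthogonal V)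
  -- `B.orthogonal` tests vectors on the right, `orthSub` on the left.
  have hb' : b ∈ orthSub B V := fun u hu => by rw [hsymm]; exact hb u hu
  rw [map_add, hTV _ (hTVp v hv) a ha, hTskew, h2 v hv b hb', neg_zero, add_zero]
end

section
/- Let W ≤ ℂ⁴ be a 2-dimensional totally isotropic subspace for the complexified Minkowski form B_ℂ. Then W ∩ \overline{W} is 1-dimensional over ℂ and is spanned by a nonzero real vector v ∈ ℝ⁴ with B(v,v) = 0; moreover the real line ℝv is the unique real line in ℝ⁴ whose complexification is contained in W. (This is the key linear-algebra step of Proposition 5 and of case (a) of Theorem 7 of the paper: a maximal isotropic subbundle W of the complexified conformal Gauss map V of signature (3,1) meets its conjugate in a real null line f = W ∩ \overline{W}.) -/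
/-!
Real vectors in `W` are pairwise orthogonal null vectors of a Lorentzian form, hence pairwise
proportional (`real_null_proportional`). Since `W ⊓ conjS W` is stable under conjugation, it is
spanned by the real and imaginary parts of its elements, which are real vectors of `W`. So
everything reduces to the existence of a nonzero real vector in `W` (`exists_real_mem`).

For that, choose `u ≠ 0` in `W` with vanishing last coordinate, `u = (a + i b, 0)`. Isotropy gives
`|a| = |b| ≠ 0` and `a ⟂ b`. Choose `y ∈ W` outside `ℂ u` with real last coordinate `s`, and
subtract a multiple of `u` so that the imaginary part `q` of `y = (p + i q, s)` is orthogonal to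
`a` and `b`. Isotropy makes `p` orthogonal to `a` and `b` as well, so `p` and `q` lie on one line
of `ℝ³`; with `p ⟂ q` and `|p|² = |q|² + s²` this forces `q = 0` (`imag_part_eq_zero`), and `y` is
real.
-/

/-- The complexified Minkowski form on `ℂ⁴`. -/
def Bc (x y : Fin 4 → ℂ) : ℂ := x 0 * y 0 + x 1 * y 1 + x 2 * y 2 - x 3 * y 3

/-- The Minkowski form of signature (3,1) on `ℝ⁴`. -/
def Br (x y : Fin 4 → ℝ) : ℝ := x 0 * y 0 + x 1 * y 1 + x 2 * y 2 - x 3 * y 3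

/-- Componentwise complex conjugation on `ℂ⁴`. -/
def conjV (v : Fin 4 → ℂ) : Fin 4 → ℂ := fun i => starRingEnd ℂ (v i)

/-- The inclusion `ℝ⁴ ↪ ℂ⁴`. -/
def realify (v : Fin 4 → ℝ) : Fin 4 → ℂ := fun i => (v i : ℂ)

/-- The conjugate `\overline{W}` of a complex subspace `W ≤ ℂ⁴`. -/
noncomputable def conjS (W : Submodule ℂ (Fin 4 → ℂ)) : Submodule ℂ (Fin 4 → ℂ) where
  carrier := conjV '' W
  add_mem' := by
    rintro x y ⟨a, ha, rfl⟩ ⟨b, hb, rfl⟩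
    exact ⟨a + b, W.add_mem ha hb, by funext i; simp [conjV]⟩
  zero_mem' := ⟨0, W.zero_mem, by funext i; simp [conjV]⟩
  smul_mem' := by
    rintro c x ⟨a, ha, rfl⟩
    exact ⟨starRingEnd ℂ c • a, W.smul_mem _ ha, by funext i; simp [conjV, mul_comm]⟩

/-- In `ℝ³`, if `p, q` are orthogonal to two orthogonal vectors `a, b` of equal nonzero length and
to each other, and `|p| ≥ |q|`, then `q = 0`. The Gram determinants of `(a, b, p)` and `(a, b, q)`
replace the choice of a basis. -/
lemma imag_part_eq_zero (a0 a1 a2 b0 b1 b2 p0 p1 p2 q0 q1 q2 s : ℝ)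
    (hN : a0 * a0 + a1 * a1 + a2 * a2 ≠ 0)
    (hab : a0 * a0 + a1 * a1 + a2 * a2 = b0 * b0 + b1 * b1 + b2 * b2)
    (h0 : a0 * b0 + a1 * b1 + a2 * b2 = 0)
    (hqa : q0 * a0 + q1 * a1 + q2 * a2 = 0)
    (hqb : q0 * b0 + q1 * b1 + q2 * b2 = 0)
    (hpa : p0 * a0 + p1 * a1 + p2 * a2 = 0)
    (hpb : p0 * b0 + p1 * b1 + p2 * b2 = 0)
    (hpq : p0 * q0 + p1 * q1 + p2 * q2 = 0)
    (hn : p0 * p0 + p1 * p1 + p2 * p2 = q0 * q0 + q1 * q1 + q2 * q2 + s * s) :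
    q0 = 0 ∧ q1 = 0 ∧ q2 = 0 := by
  -- `det (a, b, x) * det (a, b, y)` is the determinant of the matrix of inner products.
  have gram : ∀ x0 x1 x2 y0 y1 y2 : ℝ,
      (x0 * a0 + x1 * a1 + x2 * a2 = 0) → (x0 * b0 + x1 * b1 + x2 * b2 = 0) →
      (a0 * (b1 * x2 - b2 * x1) - a1 * (b0 * x2 - b2 * x0) + a2 * (b0 * x1 - b1 * x0)) *
      (a0 * (b1 * y2 - b2 * y1) - a1 * (b0 * y2 - b2 * y0) + a2 * (b0 * y1 - b1 * y0)) =
      (a0 * a0 + a1 * a1 + a2 * a2) ^ 2 * (x0 * y0 + x1 * y1 + x2 * y2) := by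
    intro x0 x1 x2 y0 y1 y2 hxa hxb
    have key :
      (a0 * (b1 * x2 - b2 * x1) - a1 * (b0 * x2 - b2 * x0) + a2 * (b0 * x1 - b1 * x0)) *
      (a0 * (b1 * y2 - b2 * y1) - a1 * (b0 * y2 - b2 * y0) + a2 * (b0 * y1 - b1 * y0)) =
      (a0 * a0 + a1 * a1 + a2 * a2) * ((b0 * b0 + b1 * b1 + b2 * b2) *
          (x0 * y0 + x1 * y1 + x2 * y2)
        - (b0 * y0 + b1 * y1 + b2 * y2) * (x0 * b0 + x1 * b1 + x2 * b2))
      - (a0 * b0 + a1 * b1 + a2 * b2) * ((a0 * b0 + a1 * b1 + a2 * b2) *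
          (x0 * y0 + x1 * y1 + x2 * y2)
        - (b0 * y0 + b1 * y1 + b2 * y2) * (x0 * a0 + x1 * a1 + x2 * a2))
      + (a0 * y0 + a1 * y1 + a2 * y2) * ((a0 * b0 + a1 * b1 + a2 * b2) *
          (x0 * b0 + x1 * b1 + x2 * b2)
        - (b0 * b0 + b1 * b1 + b2 * b2) * (x0 * a0 + x1 * a1 + x2 * a2)) := by ring
    rw [key, hxa, hxb, h0, ← hab]; ring
  have n0 := mul_self_nonneg q0
  have n1 := mul_self_nonneg q1
  have n2 := mul_self_nonneg q2
  have hqq : q0 * q0 + q1 * q1 + q2 * q2 = 0 := by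
    have h1 := gram p0 p1 p2 q0 q1 q2 hpa hpb
    rw [hpq, mul_zero] at h1
    have hN2 := pow_ne_zero 2 hN
    rcases mul_eq_zero.mp h1 with h | h
    · have h2 := gram p0 p1 p2 p0 p1 p2 hpa hpb
      rw [h, zero_mul] at h2
      have h3 := (mul_eq_zero.mp h2.symm).resolve_left hN2
      clear gram
      have := mul_self_nonneg s
      linarith
    · have h2 := gram q0 q1 q2 q0 q1 q2 hqa hqb
      rw [h, zero_mul] at h2
      exact (mul_eq_zero.mp h2.symm).resolve_left hN2
  exact ⟨mul_self_eq_zero.mp (by linarith), mul_self_eq_zero.mp (by linarith),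
    mul_self_eq_zero.mp (by linarith)⟩

lemma real_null_proportional (v w : Fin 4 → ℝ) (hv : v ≠ 0)
    (hvv : Br v v = 0) (hvw : Br v w = 0) (hww : Br w w = 0) :
    ∃ c : ℝ, w = c • v := by
  simp only [Br] at *
  have h3 : v 3 ≠ 0 := by
    intro h
    apply hv
    rw [h] at hvv
    funext i
    have n0 := mul_self_nonneg (v 0)
    have n1 := mul_self_nonneg (v 1)
    have n2 := mul_self_nonneg (v 2)
    fin_cases i <;> simp <;> first | exact h | (apply mul_self_eq_zero.mp; linarith)
  -- The spatial vector `v 3 • w - w 3 • v` is null, hence zero.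
  have hs : (v 3 * w 0 - w 3 * v 0) * (v 3 * w 0 - w 3 * v 0)
      + (v 3 * w 1 - w 3 * v 1) * (v 3 * w 1 - w 3 * v 1)
      + (v 3 * w 2 - w 3 * v 2) * (v 3 * w 2 - w 3 * v 2) = 0 := by
    linear_combination (v 3) ^ 2 * hww - 2 * v 3 * w 3 * hvw + (w 3) ^ 2 * hvv
  have n0 := mul_self_nonneg (v 3 * w 0 - w 3 * v 0)
  have n1 := mul_self_nonneg (v 3 * w 1 - w 3 * v 1)
  have n2 := mul_self_nonneg (v 3 * w 2 - w 3 * v 2)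
  have e0 := mul_self_eq_zero.mp (le_antisymm (by linarith) n0)
  have e1 := mul_self_eq_zero.mp (le_antisymm (by linarith) n1)
  have e2 := mul_self_eq_zero.mp (le_antisymm (by linarith) n2)
  refine ⟨w 3 / v 3, ?_⟩
  funext i
  fin_cases i <;> simp <;> field_simp <;> linarith

lemma Bc_realify (v w : Fin 4 → ℝ) : Bc (realify v) (realify w) = (Br v w : ℂ) := by
  simp [Bc, Br, realify]

lemma exists_real_mem (W : Submodule ℂ (Fin 4 → ℂ))
    (hdim : Module.finrank ℂ W = 2)
    (hiso : ∀ x ∈ W, ∀ y ∈ W, Bc x y = 0) :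
    ∃ v : Fin 4 → ℝ, v ≠ 0 ∧ realify v ∈ W := by
  obtain ⟨u, huW, hu0, hu3⟩ : ∃ u ∈ W, u ≠ 0 ∧ u 3 = 0 := by
    have h := LinearMap.ker_ne_bot_of_finrank_lt
      (f := (LinearMap.proj (R := ℂ) (φ := fun _ : Fin 4 => ℂ) 3).domRestrict W)
      (by rw [hdim]; simp)
    obtain ⟨x, hx, hx0⟩ := Submodule.exists_mem_ne_zero_of_ne_bot h
    exact ⟨x, x.2, by simpa using hx0, by simpa using hx⟩
  obtain ⟨y, hyW, hyu, hy3⟩ : ∃ y ∈ W, (∀ c : ℂ, y ≠ c • u) ∧ (y 3).im = 0 := by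
    obtain ⟨z, hzW, hzu⟩ : ∃ z ∈ W, z ∉ Submodule.span ℂ {u} := by
      by_contra! h
      have h1 : W ≤ Submodule.span ℂ {u} := h
      have h2 := Submodule.finrank_mono h1
      rw [hdim, finrank_span_singleton hu0] at h2
      omega
    have hz : ∀ c : ℂ, z ≠ c • u := fun c hc =>
      hzu (Submodule.mem_span_singleton.mpr ⟨c, hc.symm⟩)
    by_cases h : z 3 = 0
    · exact ⟨z, hzW, hz, by simp [h]⟩
    · refine ⟨(z 3)⁻¹ • z, W.smul_mem _ hzW, fun c hc => hz (z 3 * c) ?_, by simp [h]⟩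
      rw [mul_smul, ← hc, smul_smul, mul_inv_cancel₀ h, one_smul]
  have huu := hiso u huW u huW
  simp only [Bc, hu3] at huu
  have huR := congrArg Complex.re huu
  have huI := congrArg Complex.im huu
  simp at huR huI
  set N := (u 0).re * (u 0).re + (u 1).re * (u 1).re + (u 2).re * (u 2).re with hN
  have hab : N = (u 0).im * (u 0).im + (u 1).im * (u 1).im + (u 2).im * (u 2).im := by
    rw [hN]; linarith
  have hN0 : N ≠ 0 := by
    intro h
    apply hu0
    have r0 := mul_self_nonneg (u 0).re
    have r1 := mul_self_nonneg (u 1).re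
    have r2 := mul_self_nonneg (u 2).re
    have i0 := mul_self_nonneg (u 0).im
    have i1 := mul_self_nonneg (u 1).im
    have i2 := mul_self_nonneg (u 2).im
    funext i
    fin_cases i <;> simp <;>
      first
      | exact hu3
      | (apply Complex.ext <;> simp <;> apply mul_self_eq_zero.mp <;> linarith)
  -- The coefficient of `u` that removes the `a, b` components of `Im y`, where `u = a + i b`.
  set A := (y 0).im * (u 0).re + (y 1).im * (u 1).re + (y 2).im * (u 2).re with hA
  set B := (y 0).im * (u 0).im + (y 1).im * (u 1).im + (y 2).im * (u 2).im with hB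
  set c : ℂ := ⟨-B / N, -A / N⟩ with hc
  set z := y + c • u with hz
  have hzW : z ∈ W := W.add_mem hyW (W.smul_mem _ huW)
  have hz3 : (z 3).im = 0 := by simp [hz, hu3, hy3]
  have him : ∀ i, (z i).im = (y i).im + (-B / N * (u i).im + -A / N * (u i).re) := by
    intro i; simp [hz, hc]
  have hort : (u 0).re * (u 0).im + (u 1).re * (u 1).im + (u 2).re * (u 2).im = 0 := by
    linarith
  have hqa : (z 0).im * (u 0).re + (z 1).im * (u 1).re + (z 2).im * (u 2).re = 0 := by
    have : -A / N * N = -A := by field_simp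
    rw [him, him, him]
    linear_combination this - hA + (-B / N) * hort + (A / N) * hN
  have hqb : (z 0).im * (u 0).im + (z 1).im * (u 1).im + (z 2).im * (u 2).im = 0 := by
    have : -B / N * N = -B := by field_simp
    rw [him, him, him]
    linear_combination this - hB + (-A / N) * hort + (B / N) * hab
  have hzu := hiso z hzW u huW
  have hzz := hiso z hzW z hzW
  simp only [Bc, hu3] at hzu hzz
  have hzuR := congrArg Complex.re hzu
  have hzuI := congrArg Complex.im hzu
  have hzzR := congrArg Complex.re hzz
  have hzzI := congrArg Complex.im hzz
  simp only [Complex.add_re, Complex.sub_re, Complex.mul_re, Complex.add_im, Complex.sub_im,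
    Complex.mul_im, Complex.zero_re, Complex.zero_im, hz3] at hzuR hzuI hzzR hzzI
  obtain ⟨q0, q1, q2⟩ := imag_part_eq_zero (u 0).re (u 1).re (u 2).re (u 0).im (u 1).im (u 2).im
    (z 0).re (z 1).re (z 2).re (z 0).im (z 1).im (z 2).im (z 3).re hN0 hab hort hqa hqb
    (by linarith) (by linarith) (by linarith) (by linarith)
  have hreal : realify (fun i => (z i).re) = z := by
    funext i
    apply Complex.ext
    · simp [realify]
    · fin_cases i <;> simp [realify, q0, q1, q2, hz3]
  refine ⟨fun i => (z i).re, ?_, by rw [hreal]; exact hzW⟩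
  intro h0
  apply hyu (-c)
  have hz0 : z = 0 := by rw [← hreal, h0]; funext i; simp [realify]
  rw [neg_smul]
  exact eq_neg_of_add_eq_zero_left hz0

/-- Proposition 5 / Theorem 7(a) of the paper (linear-algebra core): a 2-dimensional
totally isotropic `W ≤ ℂ⁴` meets its conjugate in a complex line spanned by a real
null vector `v`, and `ℝv` is the unique real line whose complexification lies in `W`. -/
theorem isotropic_meets_conjugate_in_real_null_line
    (W : Submodule ℂ (Fin 4 → ℂ))
    (hdim : Module.finrank ℂ W = 2)
    (hiso : ∀ x ∈ W, ∀ y ∈ W, Bc x y = 0) :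
    Module.finrank ℂ (W ⊓ conjS W : Submodule ℂ (Fin 4 → ℂ)) = 1 ∧
      ∃ v : Fin 4 → ℝ, v ≠ 0 ∧ Br v v = 0 ∧
        (W ⊓ conjS W : Submodule ℂ (Fin 4 → ℂ)) = Submodule.span ℂ {realify v} ∧
        ∀ w : Fin 4 → ℝ, w ≠ 0 →
          Submodule.span ℂ {realify w} ≤ W →
          Submodule.span ℝ {w} = Submodule.span ℝ {v} := by
  obtain ⟨v, hv0, hvW⟩ := exists_real_mem W hdim hiso
  have hBr : ∀ x y : Fin 4 → ℝ, realify x ∈ W → realify y ∈ W → Br x y = 0 := by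
    intro x y hx hy
    have h := hiso _ hx _ hy
    rw [Bc_realify] at h
    exact_mod_cast h
  have hprop : ∀ w : Fin 4 → ℝ, realify w ∈ W → ∃ c : ℝ, w = c • v := fun w hw =>
    real_null_proportional v w hv0 (hBr v v hvW hvW) (hBr v w hvW hw) (hBr w w hw hw)
  have hrv0 : realify v ≠ 0 := by
    intro h
    apply hv0
    funext i
    have := congrFun h i
    simpa [realify] using this
  have hspan : (W ⊓ conjS W : Submodule ℂ (Fin 4 → ℂ)) = Submodule.span ℂ {realify v} := by
    apply le_antisymm
    · rintro x ⟨hx, z, hz, rfl⟩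
      have hz' : z ∈ W := hz
      have hx' : conjV z ∈ W := hx
      -- The real and imaginary parts of `z` are combinations of `z` and its conjugate.
      have hre : realify (fun i => (z i).re) ∈ W := by
        have h := W.smul_mem (1 / 2 : ℂ) (W.add_mem hz' hx')
        convert h using 1
        funext i
        apply Complex.ext <;> simp [realify, conjV] <;> ring
      have him : realify (fun i => (z i).im) ∈ W := by
        have h := W.smul_mem (-Complex.I / 2 : ℂ) (W.sub_mem hz' hx')
        convert h using 1
        funext i
        apply Complex.ext <;> simp [realify, conjV] <;> ring
      obtain ⟨r, hr⟩ := hprop _ hre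
      obtain ⟨t, ht⟩ := hprop _ him
      refine Submodule.mem_span_singleton.mpr ⟨⟨r, -t⟩, ?_⟩
      funext i
      have h1 := congrFun hr i
      have h2 := congrFun ht i
      simp at h1 h2
      apply Complex.ext <;> simp [realify, conjV, h1, h2]
    · rw [Submodule.span_singleton_le_iff_mem]
      exact ⟨hvW, realify v, hvW, by funext i; simp [conjV, realify]⟩
  refine ⟨?_, v, hv0, hBr v v hvW hvW, hspan, ?_⟩
  · rw [hspan]
    exact finrank_span_singleton hrv0
  · intro w hw0 hw
    rw [Submodule.span_singleton_le_iff_mem] at hw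
    obtain ⟨c, rfl⟩ := hprop w hw
    have hc : c ≠ 0 := by
      rintro rfl
      exact hw0 (zero_smul _ _)
    exact Submodule.span_singleton_smul_eq (IsUnit.mk0 c hc) v
end

section
/- Let u ∈ ℂ⁴ satisfy B_ℂ(u,u) = 0 and suppose u and \overline{u} are linearly independent over ℂ. Then the real vectors u + \overline{u} and i(u − \overline{u}) lie in ℝ⁴, span a 2-dimensional real subspace P on which the Minkowski form B is positive definite, and the restriction of B to the orthogonal complement of P in ℝ⁴ has signature (1,1). (This identifies the real points of U ⊕ \overline{U} and their complement in the rank-one case, case (b), of Theorem 7 of the paper.) -/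
/-- The `Br`-orthogonal complement in `ℝ⁴` of a real subspace `P`. -/
def orthR (P : Submodule ℝ (Fin 4 → ℝ)) : Submodule ℝ (Fin 4 → ℝ) where
  carrier := {x | ∀ p ∈ P, Br x p = 0}
  add_mem' := by
    intro x y hx hy p hp
    have hx' := hx p hp
    have hy' := hy p hp
    simp only [Br, Pi.add_apply] at *
    linear_combination hx' + hy'
  zero_mem' := by intro p hp; simp [Br]
  smul_mem' := by
    intro c x hx p hp
    have hx' := hx p hp
    simp only [Br, Pi.smul_apply, smul_eq_mul] at *
    linear_combination c * hx'

lemma Br_comb_left (c d : ℝ) (x y z : Fin 4 → ℝ) :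
    Br (c • x + d • y) z = c * Br x z + d * Br y z := by
  simp only [Br, Pi.add_apply, Pi.smul_apply, smul_eq_mul]; ring

lemma Br_symm (x y : Fin 4 → ℝ) : Br x y = Br y x := by
  simp only [Br]; ring

lemma Br_smul_smul (c d : ℝ) (x y : Fin 4 → ℝ) : Br (c • x) (d • y) = c * d * Br x y := by
  simp only [Br, Pi.smul_apply, smul_eq_mul]; ring

lemma Br_smul_left (c : ℝ) (x y : Fin 4 → ℝ) : Br (c • x) y = c * Br x y := by
  simp only [Br, Pi.smul_apply, smul_eq_mul]; ring

lemma mem_orthR_span_pair (a b x : Fin 4 → ℝ) :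
    x ∈ orthR (Submodule.span ℝ ({a, b} : Set (Fin 4 → ℝ))) ↔ Br x a = 0 ∧ Br x b = 0 := by
  constructor
  · intro h
    exact ⟨h a (Submodule.subset_span (by simp)), h b (Submodule.subset_span (by simp))⟩
  · rintro ⟨ha, hb⟩ p hp
    obtain ⟨c, d, rfl⟩ := Submodule.mem_span_pair.1 hp
    rw [Br_symm, Br_comb_left, Br_symm a, Br_symm b, ha, hb]
    ring

/-- A plane on which the Minkowski form is `s` times a Euclidean form has `s > 0`, since it
contains a nonzero purely spatial vector. -/
lemma scale_pos {a b : Fin 4 → ℝ} {s : ℝ} (hab : LinearIndependent ℝ ![a, b])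
    (haa : Br a a = s) (hbb : Br b b = s) (h : Br a b = 0) : 0 < s := by
  -- A nonzero vector with vanishing time coordinate is spacelike.
  have key : ∀ w : Fin 4 → ℝ, w ≠ 0 → w 3 = 0 → 0 < Br w w := by
    intro w hw h3
    have hnn : 0 ≤ Br w w := by
      simp only [Br, h3]; nlinarith [sq_nonneg (w 0), sq_nonneg (w 1), sq_nonneg (w 2)]
    refine lt_of_le_of_ne hnn fun h0 => hw ?_
    simp only [Br, h3] at h0
    have e0 : w 0 = 0 := by nlinarith [sq_nonneg (w 0), sq_nonneg (w 1), sq_nonneg (w 2)]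
    have e1 : w 1 = 0 := by nlinarith [sq_nonneg (w 0), sq_nonneg (w 1), sq_nonneg (w 2)]
    have e2 : w 2 = 0 := by nlinarith [sq_nonneg (w 0), sq_nonneg (w 1), sq_nonneg (w 2)]
    funext i
    fin_cases i <;> simpa
  by_cases h3 : a 3 = 0
  · rw [← haa]
    exact key a (hab.ne_zero 0) h3
  · have hw : b 3 • a + (-a 3) • b ≠ 0 := fun h0 =>
      h3 (neg_eq_zero.1 (LinearIndependent.pair_iff.1 hab _ _ h0).2)
    have hpos := key _ hw (by simp; ring)
    rw [Br_comb_left, Br_symm a, Br_symm b, Br_comb_left, Br_comb_left, Br_symm b a,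
      haa, hbb, h] at hpos
    by_contra hs
    nlinarith [sq_nonneg (a 3), sq_nonneg (b 3)]

/-- The cross product of the spatial parts of `a` and `b`, as a purely spatial vector. -/
def spatialCross (a b : Fin 4 → ℝ) : Fin 4 → ℝ :=
  ![a 1 * b 2 - a 2 * b 1, a 2 * b 0 - a 0 * b 2, a 0 * b 1 - a 1 * b 0, 0]

/-- The vector `s t + a₃ a + b₃ b`, where `t` is the time axis. When `a`, `b` are orthogonal with
`B(a,a) = B(b,b) = s`, it is `s` times the projection of `t` to the complement of `⟨a, b⟩`. -/
def timeProj (s : ℝ) (a b : Fin 4 → ℝ) : Fin 4 → ℝ :=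
  fun i => s * ![0, 0, 0, 1] i + a 3 * a i + b 3 * b i

lemma Br_timeProj (s : ℝ) (a b x : Fin 4 → ℝ) :
    Br x (timeProj s a b) = -s * x 3 + a 3 * Br x a + b 3 * Br x b := by
  simp [Br, timeProj]; ring

lemma timeProj_three (s : ℝ) (a b : Fin 4 → ℝ) :
    timeProj s a b 3 = s + a 3 ^ 2 + b 3 ^ 2 := by
  simp [timeProj]; ring

lemma spatialCross_orth_left (a b : Fin 4 → ℝ) : Br (spatialCross a b) a = 0 := by
  simp [Br, spatialCross]; ring

lemma spatialCross_orth_right (a b : Fin 4 → ℝ) : Br (spatialCross a b) b = 0 := by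
  simp [Br, spatialCross]; ring

/-- Lagrange's identity, with the spatial products expressed through the Minkowski ones. -/
lemma spatialCross_self (a b : Fin 4 → ℝ) :
    Br (spatialCross a b) (spatialCross a b) =
      (Br a a + a 3 ^ 2) * (Br b b + b 3 ^ 2) - (Br a b + a 3 * b 3) ^ 2 := by
  simp [Br, spatialCross]; ring

lemma eq_zero_of_orth {a b y : Fin 4 → ℝ} {s : ℝ} (hs : s ≠ 0)
    (hN : Br (spatialCross a b) (spatialCross a b) ≠ 0)
    (hya : Br y a = 0) (hyb : Br y b = 0) (hyn : Br y (spatialCross a b) = 0)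
    (hyf : Br y (timeProj s a b) = 0) : y = 0 := by
  have h3 : y 3 = 0 := by
    rw [Br_timeProj, hya, hyb] at hyf
    simpa [hs] using hyf
  -- With `n = a × b`, each coordinate comes from
  -- `|n|² y = (y·n) n + (y·a) (b × n) + (y·b) (n × a)`.
  have h0 : Br (spatialCross a b) (spatialCross a b) * y 0 = 0 := by
    simp [Br, spatialCross, h3, -mul_eq_zero] at hya hyb hyn ⊢
    linear_combination (a 1 * b 2 - a 2 * b 1) * hyn
      + (b 1 * (a 0 * b 1 - a 1 * b 0) - b 2 * (a 2 * b 0 - a 0 * b 2)) * hya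
      + ((a 2 * b 0 - a 0 * b 2) * a 2 - (a 0 * b 1 - a 1 * b 0) * a 1) * hyb
  have h1 : Br (spatialCross a b) (spatialCross a b) * y 1 = 0 := by
    simp [Br, spatialCross, h3, -mul_eq_zero] at hya hyb hyn ⊢
    linear_combination (a 2 * b 0 - a 0 * b 2) * hyn
      + (b 2 * (a 1 * b 2 - a 2 * b 1) - b 0 * (a 0 * b 1 - a 1 * b 0)) * hya
      + ((a 0 * b 1 - a 1 * b 0) * a 0 - (a 1 * b 2 - a 2 * b 1) * a 2) * hyb
  have h2 : Br (spatialCross a b) (spatialCross a b) * y 2 = 0 := by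
    simp [Br, spatialCross, h3, -mul_eq_zero] at hya hyb hyn ⊢
    linear_combination (a 0 * b 1 - a 1 * b 0) * hyn
      + (b 0 * (a 2 * b 0 - a 0 * b 2) - b 1 * (a 1 * b 2 - a 2 * b 1)) * hya
      + ((a 1 * b 2 - a 2 * b 1) * a 1 - (a 2 * b 0 - a 0 * b 2) * a 0) * hyb
  have h0' := (mul_eq_zero.1 h0).resolve_left hN
  have h1' := (mul_eq_zero.1 h1).resolve_left hN
  have h2' := (mul_eq_zero.1 h2).resolve_left hN
  funext i
  fin_cases i <;> simpa

/-- The complement of a plane with orthogonal basis `a, b` of common square `s > 0` has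
signature `(1,1)`. -/
lemma exists_orth_basis {a b : Fin 4 → ℝ} {s : ℝ} (hs : 0 < s)
    (haa : Br a a = s) (hbb : Br b b = s) (hab : Br a b = 0) :
    ∃ e f : Fin 4 → ℝ,
      e ∈ orthR (Submodule.span ℝ ({a, b} : Set (Fin 4 → ℝ))) ∧
      f ∈ orthR (Submodule.span ℝ ({a, b} : Set (Fin 4 → ℝ))) ∧
      Br e e = 1 ∧ Br f f = -1 ∧ Br e f = 0 ∧
      Submodule.span ℝ ({e, f} : Set (Fin 4 → ℝ)) =
        orthR (Submodule.span ℝ ({a, b} : Set (Fin 4 → ℝ))) := by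
  set n := spatialCross a b with hn
  set g := timeProj s a b with hg
  have hna : Br n a = 0 := spatialCross_orth_left a b
  have hnb : Br n b = 0 := spatialCross_orth_right a b
  have hga : Br g a = 0 := by
    rw [Br_symm, hg, Br_timeProj, haa, hab]; ring
  have hgb : Br g b = 0 := by
    rw [Br_symm, hg, Br_timeProj, hbb, Br_symm, hab]; ring
  have hng : Br n g = 0 := by
    rw [hg, Br_timeProj, hna, hnb, hn]; simp [spatialCross]
  set N := s * (s + a 3 ^ 2 + b 3 ^ 2) with hNdef
  have hN : 0 < N := by positivity
  have hnn : Br n n = N := by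
    rw [hn, spatialCross_self, haa, hbb, hab]; ring
  have hgg : Br g g = -N := by
    nth_rw 2 [hg]
    rw [Br_timeProj, hga, hgb, hg, timeProj_three]; ring
  set r := (√N)⁻¹ with hr
  have hr0 : r ≠ 0 := by positivity
  have hrr : r * r * N = 1 := by
    have := Real.mul_self_sqrt hN.le
    have h' : √N ≠ 0 := by positivity
    rw [hr]; field_simp; rw [sq, this]
  have he : r • n ∈ orthR (Submodule.span ℝ ({a, b} : Set (Fin 4 → ℝ))) := by
    rw [mem_orthR_span_pair, Br_smul_left, Br_smul_left, hna, hnb]; simp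
  have hf : r • g ∈ orthR (Submodule.span ℝ ({a, b} : Set (Fin 4 → ℝ))) := by
    rw [mem_orthR_span_pair, Br_smul_left, Br_smul_left, hga, hgb]; simp
  refine ⟨r • n, r • g, he, hf, ?_, ?_, ?_, le_antisymm ?_ ?_⟩
  · rw [Br_smul_smul, hnn, hrr]
  · rw [Br_smul_smul, hgg]; linarith
  · rw [Br_smul_smul, hng, mul_zero]
  · rw [Submodule.span_le]
    rintro x (rfl | rfl)
    · exact he
    · exact hf
  · intro x hx
    obtain ⟨hxa, hxb⟩ := (mem_orthR_span_pair a b x).1 hx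
    -- Subtract from `x` its orthogonal projection to `⟨n, g⟩`.
    set z := (Br x n / N) • n + (-(Br x g / N)) • g with hz
    have hsub : ∀ v, Br (x - z) v = Br x v - (Br x n / N * Br n v + -(Br x g / N) * Br g v) := by
      intro v
      rw [← Br_comb_left, ← hz]
      simp only [Br, Pi.sub_apply]; ring
    have hzero : x - z = 0 := by
      apply eq_zero_of_orth (a := a) (b := b) hs.ne' (by rw [← hn, hnn]; exact hN.ne')
      · rw [hsub, hxa, hna, hga]; ring
      · rw [hsub, hxb, hnb, hgb]; ring
      · rw [← hn, hsub, hnn, Br_symm g n, hng]; field_simp; ring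
      · rw [← hg, hsub, hgg, hng]; field_simp; ring
    rw [sub_eq_zero.1 hzero, Submodule.mem_span_pair]
    refine ⟨Br x n / N / r, -(Br x g / N) / r, ?_⟩
    rw [smul_smul, smul_smul, div_mul_cancel₀ _ hr0, div_mul_cancel₀ _ hr0]

/-- Case (b) of Theorem 7 of the paper, real-points step: for isotropic `u` independent
from its conjugate, `u + ū` and `i(u − ū)` are real vectors spanning a plane `P ≤ ℝ⁴`
on which the Minkowski form is positive definite, and the form restricted to the
orthogonal complement of `P` has signature (1,1). -/
theorem real_points_of_isotropic_line_plus_conjugate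
    (u : Fin 4 → ℂ) (h0 : Bc u u = 0)
    (hind : LinearIndependent ℂ ![u, conjV u]) :
    ∃ a b : Fin 4 → ℝ,
      realify a = u + conjV u ∧
      realify b = Complex.I • (u - conjV u) ∧
      Module.finrank ℝ (Submodule.span ℝ ({a, b} : Set (Fin 4 → ℝ))) = 2 ∧
      (∀ x ∈ Submodule.span ℝ ({a, b} : Set (Fin 4 → ℝ)), x ≠ 0 → 0 < Br x x) ∧
      ∃ e f : Fin 4 → ℝ,
        e ∈ orthR (Submodule.span ℝ ({a, b} : Set (Fin 4 → ℝ))) ∧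
        f ∈ orthR (Submodule.span ℝ ({a, b} : Set (Fin 4 → ℝ))) ∧
        Br e e = 1 ∧ Br f f = -1 ∧ Br e f = 0 ∧
        Submodule.span ℝ ({e, f} : Set (Fin 4 → ℝ)) =
          orthR (Submodule.span ℝ ({a, b} : Set (Fin 4 → ℝ))) := by
  set a : Fin 4 → ℝ := fun i => 2 * (u i).re with ha
  set b : Fin 4 → ℝ := fun i => -2 * (u i).im with hb
  have hra : realify a = u + conjV u := by
    funext i
    apply Complex.ext <;> simp [realify, conjV, ha]; ring
  have hrb : realify b = Complex.I • (u - conjV u) := by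
    funext i
    apply Complex.ext <;> simp [realify, conjV, hb]; ring
  have hre := congrArg Complex.re h0
  have him := congrArg Complex.im h0
  simp only [Bc, Complex.add_re, Complex.sub_re, Complex.mul_re, Complex.zero_re] at hre
  simp only [Bc, Complex.add_im, Complex.sub_im, Complex.mul_im, Complex.zero_im] at him
  have hbb : Br b b = Br a a := by
    simp only [Br, ha, hb]; linear_combination -4 * hre
  have hab : Br a b = 0 := by
    simp only [Br, ha, hb]; linear_combination -2 * him
  have hli : LinearIndependent ℝ ![a, b] := by
    rw [LinearIndependent.pair_iff]
    intro c d hcd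
    -- `c a + d b = (c + i d) u + (c - i d) ū`
    have hC : ((c : ℂ) + d * Complex.I) • u + ((c : ℂ) - d * Complex.I) • conjV u = 0 := by
      have h1 : (c : ℂ) • realify a + (d : ℂ) • realify b = 0 := by
        funext i
        have := congrFun hcd i
        simp only [Pi.add_apply, Pi.smul_apply, smul_eq_mul, Pi.zero_apply, realify] at this ⊢
        exact_mod_cast this
      rw [hra, hrb] at h1
      rw [← h1]
      module
    have h := (LinearIndependent.pair_iff.1 hind _ _ hC).1
    exact ⟨by simpa using congrArg Complex.re h, by simpa using congrArg Complex.im h⟩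
  have hs : 0 < Br a a := scale_pos hli rfl hbb hab
  refine ⟨a, b, hra, hrb, ?_, ?_, exists_orth_basis hs rfl hbb hab⟩
  · have := finrank_span_eq_card hli
    rwa [Matrix.range_cons_cons_empty, Fintype.card_fin] at this
  · intro x hx hx0
    obtain ⟨c, d, rfl⟩ := Submodule.mem_span_pair.1 hx
    have hform : Br (c • a + d • b) (c • a + d • b) = (c ^ 2 + d ^ 2) * Br a a := by
      rw [Br_comb_left, Br_symm a, Br_symm b, Br_comb_left, Br_comb_left, Br_symm b a, hbb, hab]
      ring
    rw [hform]
    refine mul_pos ?_ hs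
    by_contra hle
    have hc : c = 0 := by nlinarith [sq_nonneg c, sq_nonneg d]
    have hd : d = 0 := by nlinarith [sq_nonneg c, sq_nonneg d]
    exact hx0 (by simp [hc, hd])
end

section
/- Let U ≤ ℂ⁴ be a 1-dimensional totally isotropic complex subspace (for the complexified Minkowski form B_ℂ) with U ∩ \overline{U} = {0}. Then there exist exactly two real lines ℓ ≤ ℝ⁴ such that B(ℓ,ℓ) = 0 and ℓ is B_ℂ-orthogonal to U ⊕ \overline{U}. (This is the linear-algebra core of case (b) of Theorem 7 of the paper: when U = N_Z V^⊥ has rank one and U ∩ \overline{U} = 0, there are exactly two real null line subbundles f, f̂ of V orthogonal to U ⊕ \overline{U}, giving a dual pair of S-Willmore surfaces.) -/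
/-- A real line spanned by `x` is "good" for `U` if it is null and `B_ℂ`-orthogonal
to `U ⊕ \overline{U}`. -/
def IsNullOrthLine (U : Submodule ℂ (Fin 4 → ℂ)) (x : Fin 4 → ℝ) : Prop :=
  Br x x = 0 ∧ ∀ y ∈ U ⊔ conjS U, Bc (realify x) y = 0

/-- The vector `(a₄ a' + s (a' × b'), |a'|²)`, where `a'`, `b'` are the spatial parts of `a`, `b`. -/
def nullVec (a b : Fin 4 → ℝ) (s : ℝ) : Fin 4 → ℝ :=
  ![a 3 * a 0 + s * (a 1 * b 2 - a 2 * b 1),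
    a 3 * a 1 + s * (a 2 * b 0 - a 0 * b 2),
    a 3 * a 2 + s * (a 0 * b 1 - a 1 * b 0),
    a 0 ^ 2 + a 1 ^ 2 + a 2 ^ 2]

/-- A complex line has a generator with real last coordinate: multiply any generator by the
conjugate of its last coordinate, unless that coordinate vanishes. -/
lemma exists_generator (U : Submodule ℂ (Fin 4 → ℂ)) (hdim : Module.finrank ℂ U = 1) :
    ∃ u ∈ U, u ≠ 0 ∧ (u 3).im = 0 ∧ ∀ y ∈ U, ∃ c : ℂ, y = c • u := by
  have key : ∃ u ∈ U, u ≠ 0 ∧ (u 3).im = 0 := by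
    have hU : U ≠ ⊥ := by
      rintro rfl
      simp at hdim
    obtain ⟨u, hu, hu0⟩ := U.exists_mem_ne_zero_of_ne_bot hU
    by_cases h3 : u 3 = 0
    · exact ⟨u, hu, hu0, by simp [h3]⟩
    · refine ⟨starRingEnd ℂ (u 3) • u, U.smul_mem _ hu, ?_, ?_⟩
      · exact smul_ne_zero (by simpa using h3) hu0
      · simp [Complex.mul_im]
        ring
  obtain ⟨u, hu, hu0, h3⟩ := key
  refine ⟨u, hu, hu0, h3, fun y hy => ?_⟩
  have hne : (⟨u, hu⟩ : U) ≠ 0 := by simpa [Subtype.ext_iff] using hu0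
  obtain ⟨c, hc⟩ := (finrank_eq_one_iff_of_nonzero' _ hne).1 hdim ⟨y, hy⟩
  exact ⟨c, by simpa using (congrArg Subtype.val hc).symm⟩

/-- For real `x`, orthogonality to `U ⊕ Ū` is orthogonality to the real and imaginary parts of a
generator of `U`. -/
lemma isNullOrthLine_iff (U : Submodule ℂ (Fin 4 → ℂ)) (u : Fin 4 → ℂ) (hu : u ∈ U)
    (hspan : ∀ y ∈ U, ∃ c : ℂ, y = c • u) (x : Fin 4 → ℝ) :
    IsNullOrthLine U x ↔
      Br x x = 0 ∧ Br x (fun i => (u i).re) = 0 ∧ Br x (fun i => (u i).im) = 0 := by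
  have hu_iff : Bc (realify x) u = 0 ↔
      Br x (fun i => (u i).re) = 0 ∧ Br x (fun i => (u i).im) = 0 := by
    simp [Bc, Br, realify, Complex.ext_iff]
  rw [IsNullOrthLine, ← hu_iff]
  refine and_congr_right fun _ => ⟨fun h => h u (Submodule.mem_sup_left hu), fun h y hy => ?_⟩
  have hconj : Bc (realify x) (conjV u) = 0 := by
    have := congrArg (starRingEnd ℂ) h
    simpa [Bc, realify, conjV] using this
  obtain ⟨p, hp, q, hq, rfl⟩ := Submodule.mem_sup.1 hy
  obtain ⟨q', hq', rfl⟩ := hq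
  obtain ⟨c, rfl⟩ := hspan p hp
  obtain ⟨d, rfl⟩ := hspan q' hq'
  simp only [Bc, conjV, Pi.add_apply, Pi.smul_apply, smul_eq_mul, map_mul] at h hconj ⊢
  linear_combination c * h + starRingEnd ℂ d * hconj

lemma nullVec_isNullOrth (a b : Fin 4 → ℝ) (s : ℝ) (hs : s ^ 2 = 1) (hb : b 3 = 0)
    (hab : Br a b = 0) (haa : Br a a = Br b b) :
    Br (nullVec a b s) (nullVec a b s) = 0 ∧ Br (nullVec a b s) a = 0 ∧
      Br (nullVec a b s) b = 0 := by
  simp only [Br, hb] at hab haa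
  simp only [Br, nullVec, Matrix.cons_val, hb]
  refine ⟨?_, by ring, by linear_combination a 3 * hab⟩
  -- Lagrange's identity `|a' × b|² = |a'|² |b|² - (a' · b)²`.
  linear_combination
    ((a 0 ^ 2 + a 1 ^ 2 + a 2 ^ 2) * (b 0 ^ 2 + b 1 ^ 2 + b 2 ^ 2)
      - (a 0 * b 0 + a 1 * b 1 + a 2 * b 2) ^ 2) * hs
    - (a 0 * b 0 + a 1 * b 1 + a 2 * b 2) * hab
    - (a 0 ^ 2 + a 1 ^ 2 + a 2 ^ 2) * haa

lemma span_eq_of_smul_eq {x v : Fin 4 → ℝ} {A t : ℝ} (hA : A ≠ 0) (hx : x ≠ 0)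
    (h : A • x = t • v) : Submodule.span ℝ ({x} : Set (Fin 4 → ℝ)) = Submodule.span ℝ {v} := by
  have ht : t ≠ 0 := by
    rintro rfl
    rw [zero_smul] at h
    exact (smul_ne_zero hA hx) h
  rw [← Submodule.span_singleton_smul_eq (IsUnit.mk0 A hA) x, h,
    Submodule.span_singleton_smul_eq (IsUnit.mk0 t ht) v]

/-- A null vector orthogonal to `a` and `b` is proportional to one of the two vectors `nullVec`. -/
lemma smul_eq_smul_nullVec (a b x : Fin 4 → ℝ) (hb : b 3 = 0)
    (hr : 0 < b 0 ^ 2 + b 1 ^ 2 + b 2 ^ 2)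
    (hab : Br a b = 0) (haa : Br a a = Br b b)
    (hxx : Br x x = 0) (hxa : Br x a = 0) (hxb : Br x b = 0) :
    ∃ s : ℝ, (s = 1 ∨ s = -1) ∧
      (a 0 ^ 2 + a 1 ^ 2 + a 2 ^ 2) • x = x 3 • nullVec a b s := by
  simp only [Br, hb] at hab haa hxx hxa hxb
  obtain ⟨r, hrdef⟩ : ∃ r, r = b 0 ^ 2 + b 1 ^ 2 + b 2 ^ 2 := ⟨_, rfl⟩
  obtain ⟨A, hAdef⟩ : ∃ A, A = a 0 ^ 2 + a 1 ^ 2 + a 2 ^ 2 := ⟨_, rfl⟩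
  obtain ⟨c0, hc0⟩ : ∃ c, c = a 1 * b 2 - a 2 * b 1 := ⟨_, rfl⟩
  obtain ⟨c1, hc1⟩ : ∃ c, c = a 2 * b 0 - a 0 * b 2 := ⟨_, rfl⟩
  obtain ⟨c2, hc2⟩ : ∃ c, c = a 0 * b 1 - a 1 * b 0 := ⟨_, rfl⟩
  obtain ⟨g, hg⟩ : ∃ g, g = x 0 * c0 + x 1 * c1 + x 2 * c2 := ⟨_, rfl⟩
  have hr0 : r ≠ 0 := by rw [hrdef]; exact hr.ne'
  have hAr : A = r + a 3 ^ 2 := by rw [hAdef, hrdef]; linear_combination haa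
  have hdot : a 0 * b 0 + a 1 * b 1 + a 2 * b 2 = 0 := by linear_combination hab
  have hxa' : x 0 * a 0 + x 1 * a 1 + x 2 * a 2 = x 3 * a 3 := by linear_combination hxa
  have hxb' : x 0 * b 0 + x 1 * b 1 + x 2 * b 2 = 0 := by linear_combination hxb
  -- Expansion of the spatial part of `x` in the orthogonal frame `a', b, c`.
  have e0 : r * A * x 0 = r * (x 3 * a 3) * a 0 + g * c0 := by
    rw [hg, hc0, hc1, hc2, hrdef, hAdef]
    linear_combination (b 0 ^ 2 + b 1 ^ 2 + b 2 ^ 2) * a 0 * hxa'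
      + (a 0 ^ 2 + a 1 ^ 2 + a 2 ^ 2) * b 0 * hxb'
      + ((a 0 * b 0 + a 1 * b 1 + a 2 * b 2) * x 0 - (x 0 * b 0 + x 1 * b 1 + x 2 * b 2) * a 0
        - (x 0 * a 0 + x 1 * a 1 + x 2 * a 2) * b 0) * hdot
  have e1 : r * A * x 1 = r * (x 3 * a 3) * a 1 + g * c1 := by
    rw [hg, hc0, hc1, hc2, hrdef, hAdef]
    linear_combination (b 0 ^ 2 + b 1 ^ 2 + b 2 ^ 2) * a 1 * hxa'
      + (a 0 ^ 2 + a 1 ^ 2 + a 2 ^ 2) * b 1 * hxb'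
      + ((a 0 * b 0 + a 1 * b 1 + a 2 * b 2) * x 1 - (x 0 * b 0 + x 1 * b 1 + x 2 * b 2) * a 1
        - (x 0 * a 0 + x 1 * a 1 + x 2 * a 2) * b 1) * hdot
  have e2 : r * A * x 2 = r * (x 3 * a 3) * a 2 + g * c2 := by
    rw [hg, hc0, hc1, hc2, hrdef, hAdef]
    linear_combination (b 0 ^ 2 + b 1 ^ 2 + b 2 ^ 2) * a 2 * hxa'
      + (a 0 ^ 2 + a 1 ^ 2 + a 2 ^ 2) * b 2 * hxb'
      + ((a 0 * b 0 + a 1 * b 1 + a 2 * b 2) * x 2 - (x 0 * b 0 + x 1 * b 1 + x 2 * b 2) * a 2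
        - (x 0 * a 0 + x 1 * a 1 + x 2 * a 2) * b 2) * hdot
  have hg2 : g ^ 2 = (r * x 3) ^ 2 := by
    linear_combination (-x 0) * e0 - x 1 * e1 - x 2 * e2 + r * A * hxx - r * x 3 * a 3 * hxa'
      + r * x 3 ^ 2 * hAr + g * hg
  have finish : ∀ s : ℝ, g = s * (r * x 3) → A • x = x 3 • nullVec a b s := by
    intro s hgs
    rw [hgs] at e0 e1 e2
    funext i
    apply mul_left_cancel₀ hr0
    fin_cases i <;> simp only [nullVec, Pi.smul_apply, smul_eq_mul, Matrix.cons_val, ← hc0, ← hc1,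
      ← hc2, ← hAdef, Fin.zero_eta, Fin.mk_one, Fin.reduceFinMk]
    · linear_combination e0
    · linear_combination e1
    · linear_combination e2
    · ring
  rw [← hAdef]
  rcases sq_eq_sq_iff_eq_or_eq_neg.1 hg2 with h | h
  · exact ⟨1, Or.inl rfl, finish 1 (by linear_combination h)⟩
  · exact ⟨-1, Or.inr rfl, finish (-1) (by linear_combination h)⟩

/-- Case (b) of Theorem 7 of the paper (linear-algebra core): if `U ≤ ℂ⁴` is an
isotropic complex line with `U ∩ \overline{U} = 0`, there are exactly two real null
lines in `ℝ⁴` orthogonal to `U ⊕ \overline{U}`. -/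
theorem exactly_two_real_null_lines_orthogonal
    (U : Submodule ℂ (Fin 4 → ℂ))
    (hdim : Module.finrank ℂ U = 1)
    (hiso : ∀ x ∈ U, ∀ y ∈ U, Bc x y = 0)
    (hdisj : U ⊓ conjS U = ⊥) :
    ∃ v w : Fin 4 → ℝ, v ≠ 0 ∧ w ≠ 0 ∧
      IsNullOrthLine U v ∧ IsNullOrthLine U w ∧
      Submodule.span ℝ ({v} : Set (Fin 4 → ℝ)) ≠ Submodule.span ℝ ({w} : Set (Fin 4 → ℝ)) ∧
      ∀ x : Fin 4 → ℝ, x ≠ 0 → IsNullOrthLine U x →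
        Submodule.span ℝ ({x} : Set (Fin 4 → ℝ)) = Submodule.span ℝ ({v} : Set (Fin 4 → ℝ)) ∨
        Submodule.span ℝ ({x} : Set (Fin 4 → ℝ)) = Submodule.span ℝ ({w} : Set (Fin 4 → ℝ)) := by
  obtain ⟨u, hu, hu0, h3, hspan⟩ := exists_generator U hdim
  obtain ⟨a, ha⟩ : ∃ a : Fin 4 → ℝ, a = fun i => (u i).re := ⟨_, rfl⟩
  obtain ⟨b, hbdef⟩ : ∃ b : Fin 4 → ℝ, b = fun i => (u i).im := ⟨_, rfl⟩
  have hiff := isNullOrthLine_iff U u hu hspan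
  rw [← ha, ← hbdef] at hiff
  have hb : b 3 = 0 := by rw [hbdef]; exact h3
  have huu := Complex.ext_iff.1 (hiso u hu u hu)
  simp only [Bc, Complex.add_re, Complex.sub_re, Complex.mul_re, Complex.add_im, Complex.sub_im,
    Complex.mul_im, Complex.zero_re, Complex.zero_im] at huu
  have haa : Br a a = Br b b := by
    simp only [Br, ha, hbdef]
    linear_combination huu.1
  have hab : Br a b = 0 := by
    simp only [Br, ha, hbdef]
    linear_combination huu.2 / 2
  have hr : 0 < b 0 ^ 2 + b 1 ^ 2 + b 2 ^ 2 := by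
    by_contra hneg
    have h0 : b 0 = 0 := by nlinarith [sq_nonneg (b 0), sq_nonneg (b 1), sq_nonneg (b 2)]
    have h1 : b 1 = 0 := by nlinarith [sq_nonneg (b 0), sq_nonneg (b 1), sq_nonneg (b 2)]
    have h2 : b 2 = 0 := by nlinarith [sq_nonneg (b 0), sq_nonneg (b 1), sq_nonneg (b 2)]
    -- If `b = 0` then `u` is real, hence lies in `U ∩ Ū`.
    have hreal : conjV u = u := by
      funext i
      apply Complex.conj_eq_iff_im.2
      rw [hbdef] at h0 h1 h2
      fin_cases i
      exacts [h0, h1, h2, h3]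
    have hmem : u ∈ U ⊓ conjS U := ⟨hu, u, hu, hreal⟩
    rw [hdisj] at hmem
    exact hu0 (by simpa using hmem)
  have hA : 0 < a 0 ^ 2 + a 1 ^ 2 + a 2 ^ 2 := by
    have haa' := haa
    simp only [Br, hb] at haa'
    nlinarith [sq_nonneg (a 3)]
  have hne : ∀ s, nullVec a b s ≠ 0 := fun s h => by
    have := congrFun h 3
    simp only [nullVec, Matrix.cons_val, Pi.zero_apply] at this
    exact hA.ne' this
  refine ⟨nullVec a b 1, nullVec a b (-1), hne _, hne _,
    (hiff _).2 (nullVec_isNullOrth a b 1 (by norm_num) hb hab haa),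
    (hiff _).2 (nullVec_isNullOrth a b (-1) (by norm_num) hb hab haa), ?_, ?_⟩
  · intro h
    obtain ⟨k, hk⟩ := Submodule.mem_span_singleton.1
      (h ▸ Submodule.mem_span_singleton_self (nullVec a b 1))
    have k0 := congrFun hk 0
    have k1 := congrFun hk 1
    have k2 := congrFun hk 2
    have k3 := congrFun hk 3
    simp only [nullVec, Pi.smul_apply, smul_eq_mul, Matrix.cons_val] at k0 k1 k2 k3
    -- The last coordinates agree, so the factor is `1` and the cross product vanishes.
    have hk1 : k = 1 := mul_right_cancel₀ hA.ne' (by linear_combination k3)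
    subst hk1
    have c0 : a 1 * b 2 - a 2 * b 1 = 0 := by linear_combination -k0 / 2
    have c1 : a 2 * b 0 - a 0 * b 2 = 0 := by linear_combination -k1 / 2
    have c2 : a 0 * b 1 - a 1 * b 0 = 0 := by linear_combination -k2 / 2
    simp only [Br, hb] at hab
    have hprod : (a 0 ^ 2 + a 1 ^ 2 + a 2 ^ 2) * (b 0 ^ 2 + b 1 ^ 2 + b 2 ^ 2) = 0 := by
      linear_combination (a 1 * b 2 - a 2 * b 1) * c0 + (a 2 * b 0 - a 0 * b 2) * c1
        + (a 0 * b 1 - a 1 * b 0) * c2 + (a 0 * b 0 + a 1 * b 1 + a 2 * b 2) * hab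
    exact (mul_pos hA hr).ne' hprod
  · intro x hx hxU
    obtain ⟨hxx, hxa, hxb⟩ := (hiff x).1 hxU
    obtain ⟨s, hs, hsx⟩ := smul_eq_smul_nullVec a b x hb hr hab haa hxx hxa hxb
    rcases hs with rfl | rfl
    · exact Or.inl (span_eq_of_smul_eq hA.ne' hx hsx)
    · exact Or.inr (span_eq_of_smul_eq hA.ne' hx hsx)
end
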